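/- Let α be a transition rate function on [d] in (D-Lip) satisfying (Erg), and let Φ : S_d → ℝ be in (D-Lip). Define U(t,μ) := Φ(m(t;μ)). Then for every t ≥ 0, μ ∈ S_d and z ∈ [d], the linear functional derivative δU/δm(t,μ,z) exists, and it is Lipschitz continuous in μ with a Lipschitz constant uniform in t: there is a constant C such that |δU/δm(t,μ,z) − δU/δm(t,ν,z)| ≤ C|μ − ν| for all t ≥ 0, μ, ν ∈ S_d, z ∈ [d]. -/

import Mathlib

/-!
The derivative is given by the chain rule
`δU/δm(t,μ,z) = ∑ x, δΦ/δm(m(t;μ),x) * δm/δm(t,μ,z,x)`.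

Since `δΦ/δm` only records one-sided derivatives towards the vertices, the chain rule rests on a
second-order Taylor estimate (`taylor_simplex`):
`|Φ ν' - Φ ν - ∑ x, (ν' x - ν x) * δΦ ν x| ≤ C * |ν' - ν|²` on the simplex.
To prove it, extend `Φ` to the cone `{y ≥ 0, ∑ y ≥ 1}` as the `0`-homogeneous function
`y ↦ Φ (y / ∑ y)`. Its right partial derivatives are `δΦ (y / ∑ y) z / ∑ y`, which are Lipschitz,
so adding nonnegative mass one coordinate at a time and using the mean value inequality gives a
Taylor estimate for nonnegative increments (`taylor_cone`). For arbitrary `ν`, `ν'` the two points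
are compared through the common upper bound `ν ⊔ ν' = ν + (ν' - ν)⁺ = ν' + (ν - ν')⁺`.

The chain rule follows by taking `ν = m(t;μ)` and `ν' = m(t;(1-ε)μ+εδ_z)`, whose distance is `O(ε)`
by ergodicity. The uniform Lipschitz bound follows from the product structure, as all factors are
bounded and Lipschitz uniformly in `t`.
-/

open Finset Filter Topology

/-- The simplex of probability vectors on `Fin d`. -/
def simplex (d : ℕ) : Set (Fin d → ℝ) :=
  {μ | (∀ z, 0 ≤ μ z) ∧ ∑ z, μ z = 1}

/-- The ℓ¹ norm on `Fin d → ℝ`. -/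
def l1 {d : ℕ} (v : Fin d → ℝ) : ℝ := ∑ z, |v z|

/-- The `z`-th standard basis vector (Dirac measure at `z`). -/
def bvec {d : ℕ} (z : Fin d) : Fin d → ℝ := fun y => if y = z then 1 else 0

/-- Linear functional derivative: `δF/δm (μ, z) = v`. -/
def HasLFDerivAt {d : ℕ} (F : (Fin d → ℝ) → ℝ) (μ : Fin d → ℝ) (z : Fin d) (v : ℝ) : Prop :=
  Filter.Tendsto (fun ε : ℝ => (F ((1 - ε) • μ + ε • bvec z) - F μ) / ε)
    (nhdsWithin 0 (Set.Ioi 0)) (nhds v)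

/-- Directional derivative `D^m_{yz} F (μ) = v`. -/
def HasDmDerivAt {d : ℕ} (F : (Fin d → ℝ) → ℝ) (μ : Fin d → ℝ) (y z : Fin d) (v : ℝ) : Prop :=
  Filter.Tendsto (fun ε : ℝ => (F (μ + ε • (bvec z - bvec y)) - F μ) / ε)
    (nhdsWithin 0 (Set.Ioi 0)) (nhds v)

/-- `α` is a transition rate function on `[d]`. -/
def IsRate (d : ℕ) (α : (Fin d → ℝ) → Matrix (Fin d) (Fin d) ℝ) : Prop :=
  ContinuousOn α (simplex d) ∧
  (∀ μ ∈ simplex d, ∀ x y, x ≠ y → 0 ≤ α μ x y) ∧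
  (∀ μ ∈ simplex d, ∀ x, ∑ y, α μ x y = 0)

/-- `m` is the measure flow solving the nonlinear Kolmogorov equation for `α`. -/
def IsFlow {d : ℕ} (α : (Fin d → ℝ) → Matrix (Fin d) (Fin d) ℝ)
    (m : ℝ → (Fin d → ℝ) → Fin d → ℝ) : Prop :=
  ∀ μ ∈ simplex d, m 0 μ = μ ∧ (∀ t, 0 ≤ t → m t μ ∈ simplex d) ∧
    ∀ t, 0 ≤ t → HasDerivAt (fun s => m s μ) (Matrix.vecMul (m t μ) (α (m t μ))) t

/-- A real-valued function on the simplex is in (D-Lip) with linear functional derivative `δF`. -/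
def DLipR {d : ℕ} (F : (Fin d → ℝ) → ℝ) (δF : (Fin d → ℝ) → Fin d → ℝ) : Prop :=
  (∃ K : ℝ, ∀ μ ∈ simplex d, ∀ ν ∈ simplex d, |F μ - F ν| ≤ K * l1 (μ - ν)) ∧
  (∀ μ ∈ simplex d, ∀ z, HasLFDerivAt F μ z (δF μ z)) ∧
  (∃ K : ℝ, ∀ μ ∈ simplex d, ∀ ν ∈ simplex d, l1 (δF μ - δF ν) ≤ K * l1 (μ - ν))

/-- The matrix-valued transition rate function is in (D-Lip), componentwise. -/
def DLipRate {d : ℕ} (α : (Fin d → ℝ) → Matrix (Fin d) (Fin d) ℝ)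
    (δα : (Fin d → ℝ) → Fin d → Matrix (Fin d) (Fin d) ℝ) : Prop :=
  ∀ x y, DLipR (fun μ => α μ x y) (fun μ z => δα μ z x y)

/-- The ergodicity assumption (Erg) for the flow `m`, with derivative data `δm`. -/
def Erg {d : ℕ} (m : ℝ → (Fin d → ℝ) → Fin d → ℝ)
    (δm : ℝ → (Fin d → ℝ) → Fin d → Fin d → ℝ) (lam c₁ k₁ : ℝ) : Prop :=
  0 < lam ∧ 0 < c₁ ∧ 0 < k₁ ∧
  (∀ t, 0 ≤ t → ∀ μ ∈ simplex d, ∀ μ' ∈ simplex d,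
    l1 (m t μ - m t μ') ≤ c₁ * Real.exp (-lam * t) * l1 (μ - μ')) ∧
  (∀ t, 0 ≤ t → ∀ μ ∈ simplex d, ∀ z x, HasLFDerivAt (fun ν => m t ν x) μ z (δm t μ z x)) ∧
  (∀ t, 0 ≤ t → ∀ μ ∈ simplex d, ∀ μ' ∈ simplex d, ∀ z,
    l1 (δm t μ z - δm t μ' z) ≤ k₁ * l1 (μ - μ'))

/-- Empirical measure of a configuration of `N` particles. -/
noncomputable def empMeas {d N : ℕ} (x : Fin N → Fin d) : Fin d → ℝ :=
  fun z => (∑ i, if x i = z then (1 : ℝ) else 0) / N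

/-- Generator of the `N`-particle Markov chain. -/
noncomputable def genQ {d N : ℕ} (α : (Fin d → ℝ) → Matrix (Fin d) (Fin d) ℝ)
    (F : (Fin N → Fin d) → ℝ) (x : Fin N → Fin d) : ℝ :=
  ∑ i, ∑ y ∈ Finset.univ.filter (fun y => y ≠ x i),
    α (empMeas x) (x i) y * (F (Function.update x i y) - F x)

/-- `p` is the law of the `N`-particle chain: a curve of probability vectors solving the
forward Kolmogorov equation (in weak form, tested against all functions). -/
def IsLaw {d N : ℕ} (α : (Fin d → ℝ) → Matrix (Fin d) (Fin d) ℝ)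
    (p : ℝ → (Fin N → Fin d) → ℝ) : Prop :=
  (∀ t, 0 ≤ t → (∀ x, 0 ≤ p t x) ∧ (∑ x, p t x) = 1) ∧
  (∀ F : (Fin N → Fin d) → ℝ, ∀ t, 0 ≤ t →
    HasDerivAt (fun s => ∑ x, p s x * F x) (∑ x, p t x * genQ α F x) t)

/-- The linearized Kolmogorov operator `L_η`. -/
def linOp {d : ℕ} (α : (Fin d → ℝ) → Matrix (Fin d) (Fin d) ℝ)
    (δα : (Fin d → ℝ) → Fin d → Matrix (Fin d) (Fin d) ℝ)
    (η q : Fin d → ℝ) : Fin d → ℝ :=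
  Matrix.vecMul η (∑ z, q z • δα η z) + Matrix.vecMul q (α η)

/-- The linearized ergodicity assumption (Lin-Erg) with constants `lam`, `c₂`. -/
def LinErg {d : ℕ} (α : (Fin d → ℝ) → Matrix (Fin d) (Fin d) ℝ)
    (δα : (Fin d → ℝ) → Fin d → Matrix (Fin d) (Fin d) ℝ)
    (m : ℝ → (Fin d → ℝ) → Fin d → ℝ) (lam c₂ : ℝ) : Prop :=
  ∀ μ ∈ simplex d, ∀ q₀ : Fin d → ℝ, (∑ z, q₀ z) = 0 →
    ∀ r : ℝ → Fin d → ℝ, Measurable r → (∃ Cb : ℝ, ∀ t, 0 ≤ t → l1 (r t) ≤ Cb) →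
      (∀ t, 0 ≤ t → (∑ z, r t z) = 0) →
      ∀ q : ℝ → Fin d → ℝ, q 0 = q₀ →
        (∀ t, 0 ≤ t → HasDerivAt q (linOp α δα (m t μ) (q t) + r t) t) →
        ∀ t, 0 ≤ t →
          l1 (q t) ≤ c₂ * (Real.exp (-lam * t) * l1 q₀ +
            ∫ s in (0:ℝ)..t, Real.exp (-lam * (t - s)) * l1 (r s))

section Helpers

variable {d : ℕ}

/-- The cone of nonnegative vectors of total mass at least one. -/
def massCone (d : ℕ) : Set (Fin d → ℝ) := {y | (∀ z, 0 ≤ y z) ∧ 1 ≤ ∑ z, y z}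

/-- Normalization of a vector to total mass one. -/
noncomputable def massNormalize (y : Fin d → ℝ) : Fin d → ℝ := (∑ z, y z)⁻¹ • y

/-- The right partial derivative in direction `z` of the `0`-homogeneous extension
`y ↦ Φ (massNormalize y)`, in terms of the linear functional derivative of `Φ`. -/
noncomputable def homDeriv (δΦ : (Fin d → ℝ) → Fin d → ℝ) (y : Fin d → ℝ) (z : Fin d) : ℝ :=
  δΦ (massNormalize y) z / ∑ x, y x

/-! ### The simplex, the cone and normalization -/

lemma l1_nonneg (v : Fin d → ℝ) : 0 ≤ l1 v := Finset.sum_nonneg fun _ _ => abs_nonneg _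

lemma abs_apply_le_l1 (v : Fin d → ℝ) (z : Fin d) : |v z| ≤ l1 v :=
  Finset.single_le_sum (f := fun z => |v z|) (fun _ _ => abs_nonneg _) (Finset.mem_univ z)

lemma sum_bvec (z : Fin d) : ∑ x, bvec z x = 1 := by simp [bvec]

lemma bvec_nonneg (z x : Fin d) : 0 ≤ bvec z x := by unfold bvec; split_ifs <;> norm_num

lemma bvec_mem (z : Fin d) : bvec z ∈ simplex d := ⟨bvec_nonneg z, sum_bvec z⟩

lemma l1_sub_le_two {μ ν : Fin d → ℝ} (hμ : μ ∈ simplex d) (hν : ν ∈ simplex d) :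
    l1 (μ - ν) ≤ 2 := by
  calc l1 (μ - ν) ≤ ∑ z, (μ z + ν z) := by
        refine Finset.sum_le_sum fun z _ => ?_
        have h1 := hμ.1 z
        have h2 := hν.1 z
        simp only [Pi.sub_apply]
        rw [abs_le]; constructor <;> linarith
    _ = 2 := by rw [Finset.sum_add_distrib, hμ.2, hν.2]; norm_num

lemma massNormalize_mem {y : Fin d → ℝ} (hy : y ∈ massCone d) : massNormalize y ∈ simplex d := by
  have hS : 0 < ∑ z, y z := lt_of_lt_of_le one_pos hy.2
  refine ⟨fun z => ?_, ?_⟩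
  · simp only [massNormalize, Pi.smul_apply, smul_eq_mul]
    exact mul_nonneg (inv_nonneg.2 hS.le) (hy.1 z)
  · simp only [massNormalize, Pi.smul_apply, smul_eq_mul, ← Finset.mul_sum]
    exact inv_mul_cancel₀ hS.ne'

lemma massNormalize_of_mem {μ : Fin d → ℝ} (hμ : μ ∈ simplex d) : massNormalize μ = μ := by
  simp [massNormalize, hμ.2]

lemma simplex_subset_massCone {μ : Fin d → ℝ} (hμ : μ ∈ simplex d) : μ ∈ massCone d :=
  ⟨hμ.1, hμ.2.ge⟩

lemma massCone_add {y c : Fin d → ℝ} (hy : y ∈ massCone d) (hc : ∀ z, 0 ≤ c z) :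
    y + c ∈ massCone d := by
  refine ⟨fun z => add_nonneg (hy.1 z) (hc z), ?_⟩
  simp only [Pi.add_apply, Finset.sum_add_distrib]
  have := Finset.sum_nonneg fun z (_ : z ∈ Finset.univ) => hc z
  linarith [hy.2]

lemma mix_mem {μ : Fin d → ℝ} (hμ : μ ∈ simplex d) (z : Fin d) {ε : ℝ} (h0 : 0 ≤ ε) (h1 : ε ≤ 1) :
    (1 - ε) • μ + ε • bvec z ∈ simplex d := by
  refine ⟨fun x => ?_, ?_⟩
  · simp only [Pi.add_apply, Pi.smul_apply, smul_eq_mul]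
    exact add_nonneg (mul_nonneg (by linarith) (hμ.1 x)) (mul_nonneg h0 (bvec_nonneg z x))
  · simp only [Pi.add_apply, Pi.smul_apply, smul_eq_mul, Finset.sum_add_distrib, ← Finset.mul_sum,
      hμ.2, sum_bvec]
    ring

lemma l1_mix_sub_le {μ : Fin d → ℝ} (hμ : μ ∈ simplex d) (z : Fin d) {ε : ℝ} (h0 : 0 ≤ ε) :
    l1 ((1 - ε) • μ + ε • bvec z - μ) ≤ 2 * ε := by
  have : (1 - ε) • μ + ε • bvec z - μ = ε • (bvec z - μ) := by
    ext x; simp; ring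
  rw [this]
  have h2 : l1 (ε • (bvec z - μ)) = ε * l1 (bvec z - μ) := by
    simp [l1, abs_mul, abs_of_nonneg h0, Finset.mul_sum]
  rw [h2]
  nlinarith [l1_sub_le_two (bvec_mem z) hμ]

/-- Normalization is Lipschitz along nonnegative increments, because all masses are at least one. -/
lemma l1_massNormalize_add_sub_le {y c : Fin d → ℝ} (hy : y ∈ massCone d) (hc : ∀ z, 0 ≤ c z) :
    l1 (massNormalize (y + c) - massNormalize y) ≤ 2 * ∑ z, c z := by
  have hS : 0 < ∑ z, y z := lt_of_lt_of_le one_pos hy.2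
  have hq : 0 ≤ ∑ z, c z := Finset.sum_nonneg fun z _ => hc z
  have hn := massNormalize_mem hy
  have key : ∀ x, |(massNormalize (y + c) - massNormalize y) x|
      ≤ c x + (∑ z, c z) * massNormalize y x := by
    intro x
    have hx := hn.1 x
    have e : (massNormalize (y + c) - massNormalize y) x
        = (c x - (∑ z, c z) * massNormalize y x) / (∑ z, y z + ∑ z, c z) := by
      simp only [massNormalize, Pi.sub_apply, Pi.smul_apply, smul_eq_mul, Pi.add_apply,
        Finset.sum_add_distrib]
      field_simp
      ring
    rw [e, abs_div, abs_of_pos (by linarith : 0 < ∑ z, y z + ∑ z, c z)]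
    have h1 : |c x - (∑ z, c z) * massNormalize y x| ≤ c x + (∑ z, c z) * massNormalize y x := by
      have := mul_nonneg hq hx
      have := hc x
      rw [abs_le]; constructor <;> linarith
    exact (div_le_self (abs_nonneg _) (by linarith [hy.2])).trans h1
  calc l1 (massNormalize (y + c) - massNormalize y)
      ≤ ∑ x, (c x + (∑ z, c z) * massNormalize y x) := Finset.sum_le_sum fun x _ => key x
    _ = 2 * ∑ z, c z := by
        rw [Finset.sum_add_distrib, ← Finset.mul_sum, hn.2]; ring

/-- Adding mass `h` at `z` moves the normalization towards the vertex `z`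
with weight `h / (∑ y + h)`. -/
lemma massNormalize_add_bvec {y : Fin d → ℝ} (hy : y ∈ massCone d) (z : Fin d) {h : ℝ} (hh : 0 ≤ h) :
    massNormalize (y + h • bvec z)
      = (1 - h / (∑ x, y x + h)) • massNormalize y + (h / (∑ x, y x + h)) • bvec z := by
  have hS : 0 < ∑ z, y z := lt_of_lt_of_le one_pos hy.2
  have hSh : 0 < ∑ z, y z + h := by linarith
  ext x
  simp only [massNormalize, Pi.smul_apply, smul_eq_mul, Pi.add_apply,
        Finset.sum_add_distrib, ← Finset.mul_sum, sum_bvec, mul_one]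
  field_simp
  ring

/-! ### Taylor estimates -/

lemma tendsto_homExt {Φ : (Fin d → ℝ) → ℝ} {δΦ : (Fin d → ℝ) → Fin d → ℝ}
    (hD : ∀ μ ∈ simplex d, ∀ z, HasLFDerivAt Φ μ z (δΦ μ z))
    {y : Fin d → ℝ} (hy : y ∈ massCone d) (z : Fin d) :
    Tendsto (fun h : ℝ => (Φ (massNormalize (y + h • bvec z)) - Φ (massNormalize y)) / h)
      (𝓝[>] 0) (𝓝 (homDeriv δΦ y z)) := by
  have hS : 0 < ∑ z, y z := lt_of_lt_of_le one_pos hy.2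
  have h0 : Tendsto (fun h : ℝ => ∑ x, y x + h) (𝓝[>] 0) (𝓝 (∑ x, y x)) := by
    have : Continuous (fun h : ℝ => ∑ x, y x + h) := by fun_prop
    simpa using (this.tendsto 0).mono_left nhdsWithin_le_nhds
  have hid : Tendsto (fun h : ℝ => h) (𝓝[>] 0) (𝓝 0) :=
    tendsto_id.mono_left nhdsWithin_le_nhds
  have hε : Tendsto (fun h : ℝ => h / (∑ x, y x + h)) (𝓝[>] 0) (𝓝[>] 0) := by
    refine tendsto_nhdsWithin_iff.2 ⟨?_, ?_⟩
    · have h2 := hid.div h0 hS.ne'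
      rw [zero_div] at h2
      exact h2
    · filter_upwards [self_mem_nhdsWithin] with h hh
      have hh' : 0 < h := hh
      exact div_pos hh' (by linarith)
  have h1 := ((hD _ (massNormalize_mem hy) z).comp hε).div h0 hS.ne'
  refine h1.congr' ?_
  filter_upwards [self_mem_nhdsWithin] with h hh
  have hh' : 0 < h := hh
  have hSh : 0 < ∑ x, y x + h := by linarith
  simp only [Function.comp_apply, Pi.div_apply]
  rw [massNormalize_add_bvec hy z hh'.le]
  field_simp

/-- Taylor estimate in a single coordinate direction, by the mean value inequality. -/
lemma taylor_coord {Φ : (Fin d → ℝ) → ℝ} {δΦ : (Fin d → ℝ) → Fin d → ℝ} {K L : ℝ}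
    (hK : 0 ≤ K)
    (hLip : ∀ μ ∈ simplex d, ∀ ν ∈ simplex d, |Φ μ - Φ ν| ≤ K * l1 (μ - ν))
    (hD : ∀ μ ∈ simplex d, ∀ z, HasLFDerivAt Φ μ z (δΦ μ z)) (hL0 : 0 ≤ L)
    (hL : ∀ y ∈ massCone d, ∀ c : Fin d → ℝ, (∀ z, 0 ≤ c z) → ∀ z,
      |homDeriv δΦ (y + c) z - homDeriv δΦ y z| ≤ L * ∑ x, c x)
    {y : Fin d → ℝ} (hy : y ∈ massCone d) (z : Fin d) {h : ℝ} (hh : 0 ≤ h) :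
    |Φ (massNormalize (y + h • bvec z)) - Φ (massNormalize y) - h * homDeriv δΦ y z| ≤ L * h ^ 2 := by
  have hc : ∀ s : ℝ, 0 ≤ s → ∀ x, 0 ≤ (s • bvec z : Fin d → ℝ) x := fun s hs x =>
    mul_nonneg hs (bvec_nonneg z x)
  have hsum : ∀ s : ℝ, ∑ x, (s • bvec z : Fin d → ℝ) x = s := fun s => by
    simp [← Finset.mul_sum, sum_bvec]
  have hshift : ∀ s r : ℝ, y + r • bvec z = (y + s • bvec z) + (r - s) • bvec z := fun s r => by
    ext x; simp; ring
  set f : ℝ → ℝ := fun s => Φ (massNormalize (y + s • bvec z)) - s * homDeriv δΦ y z with hf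
  have hcont : ContinuousOn f (Set.Icc 0 h) := by
    refine ContinuousOn.sub ?_ (by fun_prop)
    have hmono : ∀ s r : ℝ, 0 ≤ s → s ≤ r →
        |Φ (massNormalize (y + r • bvec z)) - Φ (massNormalize (y + s • bvec z))| ≤ 2 * K * (r - s) := by
      intro s r hs hsr
      have hys := massCone_add hy (hc s hs)
      have hr0 := hc (r - s) (by linarith)
      have h1 := l1_massNormalize_add_sub_le hys hr0
      have h2 := hLip _ (massNormalize_mem (massCone_add hys hr0)) _ (massNormalize_mem hys)
      rw [hsum] at h1
      rw [hshift s r]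
      nlinarith
    refine LipschitzOnWith.continuousOn (K := Real.toNNReal (2 * K))
      (LipschitzOnWith.of_dist_le_mul ?_)
    intro r hr s hs
    rw [Real.coe_toNNReal _ (by linarith), Real.dist_eq, Real.dist_eq]
    rcases le_total s r with hsr | hsr
    · rw [abs_of_nonneg (by linarith : 0 ≤ r - s)]
      exact hmono s r hs.1 hsr
    · rw [abs_sub_comm, abs_sub_comm r s, abs_of_nonneg (by linarith : 0 ≤ s - r)]
      exact hmono r s hr.1 hsr
  have hder : ∀ s ∈ Set.Ico 0 h, HasDerivWithinAt f
      (homDeriv δΦ (y + s • bvec z) z - homDeriv δΦ y z) (Set.Ici s) s := by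
    intro s hs
    have hlin : HasDerivWithinAt (fun s : ℝ => s * homDeriv δΦ y z) (homDeriv δΦ y z)
        (Set.Ici s) s := by
      simpa using (hasDerivWithinAt_id s (Set.Ici s)).mul_const (homDeriv δΦ y z)
    refine HasDerivWithinAt.sub ?_ hlin
    rw [← hasDerivWithinAt_Ioi_iff_Ici, hasDerivWithinAt_iff_tendsto_slope' (by simp)]
    have ht := tendsto_homExt hD (massCone_add hy (hc s hs.1)) z
    have hsub : Tendsto (fun r : ℝ => r - s) (𝓝[>] s) (𝓝[>] 0) := by
      refine tendsto_nhdsWithin_iff.2 ⟨?_, ?_⟩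
      · have : Continuous (fun r : ℝ => r - s) := by fun_prop
        simpa using (this.tendsto s).mono_left nhdsWithin_le_nhds
      · filter_upwards [self_mem_nhdsWithin] with r hr
        exact sub_pos.2 (Set.mem_Ioi.1 hr)
    refine (ht.comp hsub).congr fun r => ?_
    simp only [Function.comp_apply, slope_def_field]
    rw [← hshift s r]
  have hbound : ∀ s ∈ Set.Ico 0 h,
      ‖homDeriv δΦ (y + s • bvec z) z - homDeriv δΦ y z‖ ≤ L * h := by
    intro s hs
    have := hL y hy _ (hc s hs.1) z
    rw [hsum] at this
    rw [Real.norm_eq_abs]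
    exact this.trans (mul_le_mul_of_nonneg_left hs.2.le hL0)
  have hfin := norm_image_sub_le_of_norm_deriv_right_le_segment hcont hder hbound h ⟨hh, le_rfl⟩
  rw [Real.norm_eq_abs] at hfin
  have e : f h - f 0
      = Φ (massNormalize (y + h • bvec z)) - Φ (massNormalize y) - h * homDeriv δΦ y z := by
    simp [hf]; ring
  rw [e] at hfin
  calc _ ≤ _ := hfin
    _ = L * h ^ 2 := by ring

/-- Taylor estimate for the `0`-homogeneous extension of `Φ` along nonnegative increments. -/
lemma taylor_cone {Φ : (Fin d → ℝ) → ℝ} {δΦ : (Fin d → ℝ) → Fin d → ℝ} {K L : ℝ}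
    (hK : 0 ≤ K)
    (hLip : ∀ μ ∈ simplex d, ∀ ν ∈ simplex d, |Φ μ - Φ ν| ≤ K * l1 (μ - ν))
    (hD : ∀ μ ∈ simplex d, ∀ z, HasLFDerivAt Φ μ z (δΦ μ z)) (hL0 : 0 ≤ L)
    (hL : ∀ y ∈ massCone d, ∀ c : Fin d → ℝ, (∀ z, 0 ≤ c z) → ∀ z,
      |homDeriv δΦ (y + c) z - homDeriv δΦ y z| ≤ L * ∑ x, c x)
    {y c : Fin d → ℝ} (hy : y ∈ massCone d) (hc : ∀ z, 0 ≤ c z) :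
    |Φ (massNormalize (y + c)) - Φ (massNormalize y) - ∑ x, c x * homDeriv δΦ y x|
      ≤ L * (∑ x, c x) ^ 2 := by
  have key : ∀ T : Finset (Fin d),
      |Φ (massNormalize (y + ∑ x ∈ T, c x • bvec x)) - Φ (massNormalize y)
        - ∑ x ∈ T, c x * homDeriv δΦ y x| ≤ L * (∑ x ∈ T, c x) ^ 2 := by
    intro T
    induction T using Finset.induction_on with
    | empty => simp
    | insert z T hz ih =>
      set w : Fin d → ℝ := ∑ x ∈ T, c x • bvec x with hw
      have hw0 : ∀ x, 0 ≤ w x := by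
        intro x
        rw [hw, Finset.sum_apply]
        exact Finset.sum_nonneg fun i _ => mul_nonneg (hc i) (bvec_nonneg i x)
      have hws : ∑ x, w x = ∑ x ∈ T, c x := by
        simp only [hw, Finset.sum_apply, Pi.smul_apply, smul_eq_mul]
        rw [Finset.sum_comm]
        simp [← Finset.mul_sum, sum_bvec]
      have ha : 0 ≤ ∑ x ∈ T, c x := Finset.sum_nonneg fun i _ => hc i
      have h1 := taylor_coord hK hLip hD hL0 hL (massCone_add hy hw0) z (hc z)
      have h2 := hL y hy w hw0 z
      rw [hws] at h2
      have h3 : |c z * (homDeriv δΦ (y + w) z - homDeriv δΦ y z)|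
          ≤ c z * (L * ∑ x ∈ T, c x) := by
        rw [abs_mul, abs_of_nonneg (hc z)]
        exact mul_le_mul_of_nonneg_left h2 (hc z)
      rw [Finset.sum_insert hz, Finset.sum_insert hz, Finset.sum_insert hz, ← hw,
        show y + (c z • bvec z + w) = y + w + c z • bvec z by abel]
      have hLca : 0 ≤ L * (c z * ∑ x ∈ T, c x) := mul_nonneg hL0 (mul_nonneg (hc z) ha)
      rw [abs_le] at *
      constructor <;> nlinarith [h1.1, h1.2, h3.1, h3.2, ih.1, ih.2]
  have hcs : ∑ x, c x • bvec x = c := by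
    ext x
    simp [Finset.sum_apply, bvec]
  have := key Finset.univ
  rwa [hcs] at this

/-- On the cone, the partial derivatives of the homogeneous extension are Lipschitz along
nonnegative increments. -/
lemma homDeriv_lipschitz {δΦ : (Fin d → ℝ) → Fin d → ℝ} {K M : ℝ} (hK : 0 ≤ K)
    (hLip : ∀ μ ∈ simplex d, ∀ ν ∈ simplex d, l1 (δΦ μ - δΦ ν) ≤ K * l1 (μ - ν))
    (hM : ∀ μ ∈ simplex d, ∀ z, |δΦ μ z| ≤ M)
    {y c : Fin d → ℝ} (hy : y ∈ massCone d) (hc : ∀ z, 0 ≤ c z) (z : Fin d) :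
    |homDeriv δΦ (y + c) z - homDeriv δΦ y z| ≤ (2 * K + M) * ∑ x, c x := by
  have hS : 1 ≤ ∑ z, y z := hy.2
  have hq : 0 ≤ ∑ z, c z := Finset.sum_nonneg fun z _ => hc z
  have hyc := massCone_add hy hc
  have h1 : |δΦ (massNormalize (y + c)) z - δΦ (massNormalize y) z| ≤ K * (2 * ∑ x, c x) :=
    (abs_apply_le_l1 (δΦ (massNormalize (y + c)) - δΦ (massNormalize y)) z).trans
      ((hLip _ (massNormalize_mem hyc) _ (massNormalize_mem hy)).trans
        (mul_le_mul_of_nonneg_left (l1_massNormalize_add_sub_le hy hc) hK))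
  have h2 := hM _ (massNormalize_mem hy) z
  have hsum : ∑ x, (y + c) x = ∑ x, y x + ∑ x, c x := by simp [Finset.sum_add_distrib]
  unfold homDeriv
  rw [hsum]
  set a := δΦ (massNormalize (y + c)) z
  set b := δΦ (massNormalize y) z
  set S := ∑ x, y x
  set q := ∑ x, c x
  have hS0 : 0 < S := by linarith
  have hSq : 0 < S + q := by linarith
  have e : a / (S + q) - b / S = ((a - b) - b * (q / S)) / (S + q) := by
    field_simp; ring
  have hqS : q / S ≤ q := div_le_self hq hS
  have hqS0 : 0 ≤ q / S := div_nonneg hq hS0.le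
  rw [e, abs_div, abs_of_pos hSq]
  refine (div_le_self (abs_nonneg _) (by linarith)).trans ?_
  refine (abs_sub _ _).trans ?_
  rw [abs_mul, abs_of_nonneg hqS0]
  have : |b| * (q / S) ≤ M * q := mul_le_mul h2 hqS hqS0 ((abs_nonneg b).trans h2)
  nlinarith

/-- Second-order Taylor estimate on the simplex, through the common upper bound `ν ⊔ ν'`. -/
lemma taylor_simplex {Φ : (Fin d → ℝ) → ℝ} {δΦ : (Fin d → ℝ) → Fin d → ℝ} {K K' M : ℝ}
    (hK : 0 ≤ K) (hK' : 0 ≤ K') (hM0 : 0 ≤ M)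
    (hLip : ∀ μ ∈ simplex d, ∀ ν ∈ simplex d, |Φ μ - Φ ν| ≤ K * l1 (μ - ν))
    (hD : ∀ μ ∈ simplex d, ∀ z, HasLFDerivAt Φ μ z (δΦ μ z))
    (hLip' : ∀ μ ∈ simplex d, ∀ ν ∈ simplex d, l1 (δΦ μ - δΦ ν) ≤ K' * l1 (μ - ν))
    (hM : ∀ μ ∈ simplex d, ∀ z, |δΦ μ z| ≤ M)
    {ν ν' : Fin d → ℝ} (hν : ν ∈ simplex d) (hν' : ν' ∈ simplex d) :
    |Φ ν' - Φ ν - ∑ x, (ν' x - ν x) * δΦ ν x| ≤ (5 * K' + 2 * M) * l1 (ν' - ν) ^ 2 := by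
  have hL : ∀ y ∈ massCone d, ∀ c : Fin d → ℝ, (∀ z, 0 ≤ c z) → ∀ z,
      |homDeriv δΦ (y + c) z - homDeriv δΦ y z| ≤ (2 * K' + M) * ∑ x, c x :=
    fun y hy c hc z => homDeriv_lipschitz hK' hLip' hM hy hc z
  have hL0 : 0 ≤ 2 * K' + M := by positivity
  have hhom : ∀ μ ∈ simplex d, ∀ x, homDeriv δΦ μ x = δΦ μ x := fun μ hμ x => by
    simp [homDeriv, massNormalize_of_mem hμ, hμ.2]
  set p : Fin d → ℝ := fun x => max (ν' x - ν x) 0 with hp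
  set n : Fin d → ℝ := fun x => max (ν x - ν' x) 0 with hn
  have hp0 : ∀ x, 0 ≤ p x := fun x => le_max_right _ _
  have hn0 : ∀ x, 0 ≤ n x := fun x => le_max_right _ _
  have hpn : ∀ x, p x - n x = ν' x - ν x := fun x => by
    simp only [hp, hn]
    rcases le_total (ν x) (ν' x) with h | h
    · rw [max_eq_left (by linarith), max_eq_right (by linarith)]; ring
    · rw [max_eq_right (by linarith), max_eq_left (by linarith)]; ring
  have hcommon : ν + p = ν' + n := by
    ext x
    have := hpn x
    simp only [Pi.add_apply]; linarith
  have hpl : ∑ x, p x ≤ l1 (ν' - ν) :=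
    Finset.sum_le_sum fun x _ => max_le (le_abs_self _) (abs_nonneg _)
  have hnl : ∑ x, n x ≤ l1 (ν' - ν) :=
    Finset.sum_le_sum fun x _ => max_le (by
      simp only [Pi.sub_apply]; rw [abs_sub_comm]; exact le_abs_self _) (abs_nonneg _)
  have hps : 0 ≤ ∑ x, p x := Finset.sum_nonneg fun x _ => hp0 x
  have hns : 0 ≤ ∑ x, n x := Finset.sum_nonneg fun x _ => hn0 x
  have h1 := taylor_cone hK hLip hD hL0 hL (simplex_subset_massCone hν) hp0
  have h2 := taylor_cone hK hLip hD hL0 hL (simplex_subset_massCone hν') hn0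
  rw [← hcommon] at h2
  simp only [hhom ν hν, hhom ν' hν', massNormalize_of_mem hν, massNormalize_of_mem hν'] at h1 h2
  have h1' := h1.trans (mul_le_mul_of_nonneg_left (pow_le_pow_left₀ hps hpl 2) hL0)
  have h2' := h2.trans (mul_le_mul_of_nonneg_left (pow_le_pow_left₀ hns hnl 2) hL0)
  have h3 : |∑ x, n x * (δΦ ν' x - δΦ ν x)| ≤ K' * l1 (ν' - ν) ^ 2 := by
    have hx : ∀ x, |n x * (δΦ ν' x - δΦ ν x)| ≤ n x * (K' * l1 (ν' - ν)) := fun x => by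
      rw [abs_mul, abs_of_nonneg (hn0 x)]
      exact mul_le_mul_of_nonneg_left
        ((abs_apply_le_l1 (δΦ ν' - δΦ ν) x).trans (hLip' _ hν' _ hν)) (hn0 x)
    calc _ ≤ ∑ x, |n x * (δΦ ν' x - δΦ ν x)| := Finset.abs_sum_le_sum_abs _ _
      _ ≤ ∑ x, n x * (K' * l1 (ν' - ν)) := Finset.sum_le_sum fun x _ => hx x
      _ = (∑ x, n x) * (K' * l1 (ν' - ν)) := by rw [Finset.sum_mul]
      _ ≤ l1 (ν' - ν) * (K' * l1 (ν' - ν)) :=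
        mul_le_mul_of_nonneg_right hnl (mul_nonneg hK' (l1_nonneg _))
      _ = K' * l1 (ν' - ν) ^ 2 := by ring
  have e : ∑ x, (ν' x - ν x) * δΦ ν x
      = ∑ x, p x * δΦ ν x - ∑ x, n x * δΦ ν' x + ∑ x, n x * (δΦ ν' x - δΦ ν x) := by
    rw [← Finset.sum_sub_distrib, ← Finset.sum_add_distrib]
    refine Finset.sum_congr rfl fun x _ => ?_
    rw [← hpn x]; ring
  rw [e]
  rw [abs_le] at *
  constructor <;> nlinarith [h1'.1, h1'.2, h2'.1, h2'.2, h3.1, h3.2]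

/-- A Lipschitz linear functional derivative is bounded: compare with its values at the vertices. -/
lemma exists_bound {δΦ : (Fin d → ℝ) → Fin d → ℝ} {K : ℝ} (hK : 0 ≤ K)
    (hLip : ∀ μ ∈ simplex d, ∀ ν ∈ simplex d, l1 (δΦ μ - δΦ ν) ≤ K * l1 (μ - ν)) :
    ∃ M, 0 ≤ M ∧ ∀ μ ∈ simplex d, ∀ z, |δΦ μ z| ≤ M := by
  have hs : 0 ≤ ∑ z, |δΦ (bvec z) z| := Finset.sum_nonneg fun z _ => abs_nonneg _
  refine ⟨∑ z, |δΦ (bvec z) z| + K * 2, by positivity, fun μ hμ z => ?_⟩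
  have h1 := (abs_apply_le_l1 (δΦ μ - δΦ (bvec z)) z).trans
    ((hLip μ hμ _ (bvec_mem z)).trans
      (mul_le_mul_of_nonneg_left (l1_sub_le_two hμ (bvec_mem z)) hK))
  have h2 : |δΦ (bvec z) z| ≤ ∑ z, |δΦ (bvec z) z| :=
    Finset.single_le_sum (f := fun z => |δΦ (bvec z) z|) (fun _ _ => abs_nonneg _)
      (Finset.mem_univ z)
  have h3 : |δΦ μ z| ≤ |δΦ μ z - δΦ (bvec z) z| + |δΦ (bvec z) z| := by
    simpa using abs_add_le (δΦ μ z - δΦ (bvec z) z) (δΦ (bvec z) z)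
  simp only [Pi.sub_apply] at h1
  linarith

end Helpers

/-! ### The chain rule and the uniform Lipschitz bound -/

/-- For `U(t,μ) := Φ(m(t;μ))`, the linear functional derivative `δU/δm(t,μ,z)`
exists and is Lipschitz in `μ` uniformly in time. -/
theorem master_derivative_exists_and_uniformly_lipschitz {d : ℕ} (hd : 1 < d)
    (α : (Fin d → ℝ) → Matrix (Fin d) (Fin d) ℝ)
    (δα : (Fin d → ℝ) → Fin d → Matrix (Fin d) (Fin d) ℝ)
    (m : ℝ → (Fin d → ℝ) → Fin d → ℝ)
    (δm : ℝ → (Fin d → ℝ) → Fin d → Fin d → ℝ)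
    (lam c₁ k₁ : ℝ)
    (hα : IsRate d α) (hαD : DLipRate α δα)
    (hm : IsFlow α m) (hErg : Erg m δm lam c₁ k₁)
    (Φ : (Fin d → ℝ) → ℝ) (δΦ : (Fin d → ℝ) → Fin d → ℝ) (hΦ : DLipR Φ δΦ) :
    ∃ (δU : ℝ → (Fin d → ℝ) → Fin d → ℝ) (C : ℝ),
      (∀ t : ℝ, 0 ≤ t → ∀ μ ∈ simplex d, ∀ z,
        HasLFDerivAt (fun ν => Φ (m t ν)) μ z (δU t μ z)) ∧
      (∀ t : ℝ, 0 ≤ t → ∀ μ ∈ simplex d, ∀ ν ∈ simplex d, ∀ z,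
        |δU t μ z - δU t ν z| ≤ C * l1 (μ - ν)) := by
  obtain ⟨⟨K₀, hLip₀⟩, hD, ⟨K₁, hLip₁⟩⟩ := hΦ
  obtain ⟨hlam, hc₁, hk₁, hflow, hδm, hδmL⟩ := hErg
  have hLip : ∀ μ ∈ simplex d, ∀ ν ∈ simplex d, |Φ μ - Φ ν| ≤ |K₀| * l1 (μ - ν) :=
    fun μ hμ ν hν => (hLip₀ μ hμ ν hν).trans
      (mul_le_mul_of_nonneg_right (le_abs_self _) (l1_nonneg _))
  have hLip' : ∀ μ ∈ simplex d, ∀ ν ∈ simplex d, l1 (δΦ μ - δΦ ν) ≤ |K₁| * l1 (μ - ν) :=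
    fun μ hμ ν hν => (hLip₁ μ hμ ν hν).trans
      (mul_le_mul_of_nonneg_right (le_abs_self _) (l1_nonneg _))
  obtain ⟨M, hM0, hM⟩ := exists_bound (abs_nonneg K₁) hLip'
  have hmem : ∀ t, 0 ≤ t → ∀ μ ∈ simplex d, m t μ ∈ simplex d :=
    fun t ht μ hμ => (hm μ hμ).2.1 t ht
  -- The exponential factor is dropped: only the uniform bound by `c₁` is used.
  have hflow' : ∀ t, 0 ≤ t → ∀ μ ∈ simplex d, ∀ ν ∈ simplex d,
      l1 (m t μ - m t ν) ≤ c₁ * l1 (μ - ν) := by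
    intro t ht μ hμ ν hν
    refine (hflow t ht μ hμ ν hν).trans (mul_le_mul_of_nonneg_right ?_ (l1_nonneg _))
    have : Real.exp (-lam * t) ≤ 1 := Real.exp_le_one_iff.2 (by nlinarith)
    nlinarith
  have hsmall : ∀ᶠ ε : ℝ in 𝓝[>] 0, 0 < ε ∧ ε < 1 := by
    have := Ioo_mem_nhdsGT (zero_lt_one (α := ℝ))
    filter_upwards [this] with ε hε using hε
  have hstep : ∀ t, 0 ≤ t → ∀ μ ∈ simplex d, ∀ z, ∀ ε : ℝ, 0 < ε → ε < 1 →
      l1 (m t ((1 - ε) • μ + ε • bvec z) - m t μ) ≤ 2 * c₁ * ε := by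
    intro t ht μ hμ z ε h0 h1
    have h2 := hflow' t ht _ (mix_mem hμ z h0.le h1.le) μ hμ
    have h3 := l1_mix_sub_le hμ z h0.le
    nlinarith
  have hδmB : ∀ t, 0 ≤ t → ∀ μ ∈ simplex d, ∀ z x, |δm t μ z x| ≤ 2 * c₁ := by
    intro t ht μ hμ z x
    refine le_of_tendsto (hδm t ht μ hμ z x).abs ?_
    filter_upwards [hsmall] with ε hε
    rw [abs_div, abs_of_pos hε.1, div_le_iff₀ hε.1]
    exact (abs_apply_le_l1 (m t ((1 - ε) • μ + ε • bvec z) - m t μ) x).trans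
      (hstep t ht μ hμ z ε hε.1 hε.2)
  refine ⟨fun t μ z => ∑ x, δm t μ z x * δΦ (m t μ) x,
    2 * c₁ * (|K₁| * c₁) + M * k₁, ?_, ?_⟩
  · intro t ht μ hμ z
    have hlin : Tendsto (fun ε : ℝ => ∑ x,
        ((m t ((1 - ε) • μ + ε • bvec z) x - m t μ x) / ε) * δΦ (m t μ) x) (𝓝[>] 0)
        (𝓝 (∑ x, δm t μ z x * δΦ (m t μ) x)) :=
      tendsto_finsetSum _ fun x _ => (hδm t ht μ hμ z x).mul_const _
    have hrem : Tendsto (fun ε : ℝ => (Φ (m t ((1 - ε) • μ + ε • bvec z)) - Φ (m t μ)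
        - ∑ x, (m t ((1 - ε) • μ + ε • bvec z) x - m t μ x) * δΦ (m t μ) x) / ε)
        (𝓝[>] 0) (𝓝 0) := by
      have hz : Tendsto (fun ε : ℝ => (5 * |K₁| + 2 * M) * (2 * c₁) ^ 2 * ε) (𝓝[>] 0) (𝓝 0) := by
        have : Continuous (fun ε : ℝ => (5 * |K₁| + 2 * M) * (2 * c₁) ^ 2 * ε) := by fun_prop
        simpa using (this.tendsto 0).mono_left nhdsWithin_le_nhds
      refine squeeze_zero_norm' ?_ hz
      filter_upwards [hsmall] with ε hε
      rw [Real.norm_eq_abs, abs_div, abs_of_pos hε.1, div_le_iff₀ hε.1]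
      refine (taylor_simplex (abs_nonneg K₀) (abs_nonneg K₁) hM0 hLip hD hLip' hM
        (hmem t ht μ hμ) (hmem t ht _ (mix_mem hμ z hε.1.le hε.2.le))).trans ?_
      have hsq := pow_le_pow_left₀ (l1_nonneg _) (hstep t ht μ hμ z ε hε.1 hε.2) 2
      refine (mul_le_mul_of_nonneg_left hsq (by positivity)).trans (le_of_eq ?_)
      ring
    have hadd := hrem.add hlin
    rw [zero_add] at hadd
    refine hadd.congr fun ε => ?_
    rw [sub_div, Finset.sum_div]
    have : ∀ x, (m t ((1 - ε) • μ + ε • bvec z) x - m t μ x) * δΦ (m t μ) x / ε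
        = ((m t ((1 - ε) • μ + ε • bvec z) x - m t μ x) / ε) * δΦ (m t μ) x := fun x => by ring
    simp only [this]
    ring
  · intro t ht μ hμ ν hν z
    have e : ∑ x, δm t μ z x * δΦ (m t μ) x - ∑ x, δm t ν z x * δΦ (m t ν) x
        = ∑ x, (δm t μ z x * (δΦ (m t μ) x - δΦ (m t ν) x)
          + δΦ (m t ν) x * (δm t μ z x - δm t ν z x)) := by
      rw [← Finset.sum_sub_distrib]
      exact Finset.sum_congr rfl fun x _ => by ring
    have hx : ∀ x, |δm t μ z x * (δΦ (m t μ) x - δΦ (m t ν) x)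
          + δΦ (m t ν) x * (δm t μ z x - δm t ν z x)|
        ≤ 2 * c₁ * |(δΦ (m t μ) - δΦ (m t ν)) x| + M * |(δm t μ z - δm t ν z) x| := by
      intro x
      refine (abs_add_le _ _).trans ?_
      rw [abs_mul, abs_mul]
      exact add_le_add
        (mul_le_mul_of_nonneg_right (hδmB t ht μ hμ z x) (abs_nonneg _))
        (mul_le_mul_of_nonneg_right (hM _ (hmem t ht ν hν) x) (abs_nonneg _))
    have h1 : l1 (δΦ (m t μ) - δΦ (m t ν)) ≤ |K₁| * (c₁ * l1 (μ - ν)) :=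
      (hLip' _ (hmem t ht μ hμ) _ (hmem t ht ν hν)).trans
        (mul_le_mul_of_nonneg_left (hflow' t ht μ hμ ν hν) (abs_nonneg _))
    have h2 := hδmL t ht μ hμ ν hν z
    change |∑ x, δm t μ z x * δΦ (m t μ) x - ∑ x, δm t ν z x * δΦ (m t ν) x| ≤ _
    rw [e]
    calc _ ≤ ∑ x, (2 * c₁ * |(δΦ (m t μ) - δΦ (m t ν)) x| + M * |(δm t μ z - δm t ν z) x|) :=
          (Finset.abs_sum_le_sum_abs _ _).trans (Finset.sum_le_sum fun x _ => hx x)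
      _ = 2 * c₁ * l1 (δΦ (m t μ) - δΦ (m t ν)) + M * l1 (δm t μ z - δm t ν z) := by
          rw [Finset.sum_add_distrib, ← Finset.mul_sum, ← Finset.mul_sum]; rfl
      _ ≤ 2 * c₁ * (|K₁| * (c₁ * l1 (μ - ν))) + M * (k₁ * l1 (μ - ν)) :=
          add_le_add (mul_le_mul_of_nonneg_left h1 (by positivity))
            (mul_le_mul_of_nonneg_left h2 hM0)
      _ = _ := by ring
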